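/- Let A and B be finite sets of integers with |A| = a ≥ 2 and |B| = b ≥ 2, and suppose the sumset A + B = {α + β : α ∈ A, β ∈ B} satisfies |A + B| = a + b − 1. Then A and B are both arithmetic progressions with the same common difference: writing A = {u₀ < u₁ < ⋯ < u_{a−1}} and B = {v₀ < v₁ < ⋯ < v_{b−1}}, one has u_p − u_{p−1} = v_q − v_{q−1} for all 1 ≤ p ≤ a−1 and 1 ≤ q ≤ b−1. -/

import Mathlib

open Pointwise

/-!
Let `x < x'` be consecutive in `A` and `y < y'` consecutive in `B`. By the Cauchy–Davenport bound,
applied to the parts of `A` and `B` up to `x` and `y` and to the parts from `x'` and `y'` on, at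
least `|A| + |B| - 2` elements of `A + B` are either at most `x + y` or at least `x' + y'`. Both
`x + y'` and `x' + y` lie strictly between these bounds, so if `|A + B| < |A| + |B|` they coincide.
-/

section

open Finset

variable {α : Type*} [LinearOrder α]

lemma card_filter_le_add_card_filter_lt_lt_add_card_filter_ge (s : Finset α) {c d : α}
    (hcd : c < d) :
    #{z ∈ s | z ≤ c} + #{z ∈ s | c < z ∧ z < d} + #{z ∈ s | d ≤ z} = #s := by
  have hsplit : #{z ∈ s | z ≤ c} + #{z ∈ s | c < z} = #s := by
    simpa only [not_le] using card_filter_add_card_filter_not (s := s) (· ≤ c)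
  have hupper : #{z ∈ s | c < z ∧ z < d} + #{z ∈ s | c < z ∧ d ≤ z} = #{z ∈ s | c < z} := by
    simpa only [filter_filter, not_lt] using
      card_filter_add_card_filter_not (s := {z ∈ s | c < z}) (· < d)
  have hge (z : α) : c < z ∧ d ≤ z ↔ d ≤ z := and_iff_right_of_imp hcd.trans_le
  rw [← hsplit, ← hupper, add_assoc]
  simp only [hge]

lemma card_filter_le_add_card_filter_ge_of_covBy {ι : Type*} [LinearOrder ι] {u : ι → α}
    (hu : StrictMono u) {s : Finset α} (hs : Set.range u = s) {i i' : ι} (hi : i ⋖ i') :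
    #{z ∈ s | z ≤ u i} + #{z ∈ s | u i' ≤ z} = #s := by
  have hgap : {z ∈ s | u i < z ∧ z < u i'} = ∅ := by
    refine filter_eq_empty_iff.2 fun z hz ⟨hiz, hzi'⟩ => ?_
    obtain ⟨k, rfl⟩ : z ∈ Set.range u := hs ▸ hz
    exact hi.2 (hu.lt_iff_lt.1 hiz) (hu.lt_iff_lt.1 hzi')
  simpa [hgap] using card_filter_le_add_card_filter_lt_lt_add_card_filter_ge s (hu hi.lt)

variable [Add α] [IsCancelAdd α] [AddLeftMono α] [AddRightMono α]
  {s t : Finset α} {x x' y y' : α}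

lemma card_filter_le_add_card_filter_le_le_card_filter_add (hx : x ∈ s) (hy : y ∈ t) :
    #{a ∈ s | a ≤ x} + #{b ∈ t | b ≤ y} ≤ #{z ∈ s + t | z ≤ x + y} + 1 := by
  have hsub : {a ∈ s | a ≤ x} + {b ∈ t | b ≤ y} ⊆ {z ∈ s + t | z ≤ x + y} := by
    refine add_subset_iff.2 fun a ha b hb => ?_
    rw [mem_filter] at ha hb ⊢
    exact ⟨add_mem_add ha.1 hb.1, add_le_add ha.2 hb.2⟩
  have hcauchy := cauchy_davenport_add_of_linearOrder_isCancelAdd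
    (s := {a ∈ s | a ≤ x}) (t := {b ∈ t | b ≤ y})
    ⟨x, mem_filter.2 ⟨hx, le_rfl⟩⟩ ⟨y, mem_filter.2 ⟨hy, le_rfl⟩⟩
  have hcard := card_le_card hsub
  omega

lemma card_filter_ge_add_card_filter_ge_le_card_filter_add (hx : x ∈ s) (hy : y ∈ t) :
    #{a ∈ s | x ≤ a} + #{b ∈ t | y ≤ b} ≤ #{z ∈ s + t | x + y ≤ z} + 1 :=
  card_filter_le_add_card_filter_le_le_card_filter_add (α := αᵒᵈ) hx hy

lemma two_le_card_filter_add_lt_lt (hx : x ∈ s) (hx' : x' ∈ s) (hy : y ∈ t) (hy' : y' ∈ t)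
    (hxx' : x < x') (hyy' : y < y') (hne : x + y' ≠ x' + y) :
    2 ≤ #{z ∈ s + t | x + y < z ∧ z < x' + y'} := by
  rw [← card_pair hne]
  refine card_le_card (insert_subset_iff.2 ⟨?_, singleton_subset_iff.2 ?_⟩)
  · exact mem_filter.2
      ⟨add_mem_add hx hy', add_lt_add_right hyy' x, add_lt_add_left hxx' y'⟩
  · exact mem_filter.2
      ⟨add_mem_add hx' hy, add_lt_add_left hxx' y, add_lt_add_right hyy' x'⟩

lemma card_filter_le_add_card_filter_ge_le_card_add (hx : x ∈ s) (hx' : x' ∈ s)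
    (hy : y ∈ t) (hy' : y' ∈ t) (hxx' : x < x') (hyy' : y < y') (hne : x + y' ≠ x' + y) :
    (#{a ∈ s | a ≤ x} + #{a ∈ s | x' ≤ a}) + (#{b ∈ t | b ≤ y} + #{b ∈ t | y' ≤ b})
      ≤ #(s + t) := by
  have hlower := card_filter_le_add_card_filter_le_le_card_filter_add hx hy
  have hmiddle := two_le_card_filter_add_lt_lt hx hx' hy hy' hxx' hyy' hne
  have hupper := card_filter_ge_add_card_filter_ge_le_card_filter_add hx' hy'
  have htotal := card_filter_le_add_card_filter_lt_lt_add_card_filter_ge (s + t)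
    (add_lt_add hxx' hyy')
  omega

/-- The equality `u i' - u i = v j' - v j` of consecutive gaps, stated without subtraction. -/
theorem sumset_small_implies_AP_general {ι κ : Type*} [LinearOrder ι] [LinearOrder κ]
    {u : ι → α} {v : κ → α} (hu : StrictMono u) (hv : StrictMono v)
    (hs : Set.range u = s) (ht : Set.range v = t) (hst : #(s + t) < #s + #t)
    {i i' : ι} {j j' : κ} (hi : i ⋖ i') (hj : j ⋖ j') :
    u i + v j' = u i' + v j := by
  have hus (k : ι) : u k ∈ s := mem_coe.1 (hs ▸ Set.mem_range_self k)
  have hvt (k : κ) : v k ∈ t := mem_coe.1 (ht ▸ Set.mem_range_self k)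
  by_contra hne
  refine hst.not_ge ?_
  calc
    #s + #t = (#{a ∈ s | a ≤ u i} + #{a ∈ s | u i' ≤ a})
        + (#{b ∈ t | b ≤ v j} + #{b ∈ t | v j' ≤ b}) := by
      rw [card_filter_le_add_card_filter_ge_of_covBy hu hs hi,
        card_filter_le_add_card_filter_ge_of_covBy hv ht hj]
    _ ≤ #(s + t) := card_filter_le_add_card_filter_ge_le_card_add (hus i) (hus i')
      (hvt j) (hvt j') (hu hi.lt) (hv hj.lt) hne

end

lemma mk_sub_one_covBy_mk {n k : ℕ} (hk : 1 ≤ k) (hkn : k < n) :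
    (⟨k - 1, by omega⟩ : Fin n) ⋖ ⟨k, hkn⟩ :=
  Fin.covBy_iff.2 (Nat.covBy_iff_add_one_eq.2 (Nat.sub_add_cancel hk))

/-- If `A` and `B` are finite sets of integers with `|A| = a ≥ 2`, `|B| = b ≥ 2` and
`|A + B| = a + b − 1`, then `A` and `B` are arithmetic progressions with the same common
difference: for strictly monotone enumerations `u` of `A` and `v` of `B`, all the
consecutive differences `u_p − u_{p−1}` and `v_q − v_{q−1}` coincide. -/
theorem sumset_small_implies_AP
    (a b : ℕ) (ha : 2 ≤ a) (hb : 2 ≤ b) (A B : Finset ℤ)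
    (hA : A.card = a) (hB : B.card = b) (hsum : (A + B).card = a + b - 1)
    (u : Fin a → ℤ) (v : Fin b → ℤ) (hu : StrictMono u) (hv : StrictMono v)
    (huA : ∀ x : ℤ, x ∈ A ↔ ∃ i, u i = x) (hvB : ∀ x : ℤ, x ∈ B ↔ ∃ i, v i = x)
    (p q : ℕ) (hp1 : 1 ≤ p) (hp2 : p ≤ a - 1) (hq1 : 1 ≤ q) (hq2 : q ≤ b - 1) :
    u ⟨p, by omega⟩ - u ⟨p - 1, by omega⟩ = v ⟨q, by omega⟩ - v ⟨q - 1, by omega⟩ := by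
  have hadd := sumset_small_implies_AP_general hu hv (Set.ext fun x => (huA x).symm)
    (Set.ext fun x => (hvB x).symm) (by omega) (mk_sub_one_covBy_mk hp1 (by omega))
    (mk_sub_one_covBy_mk hq1 (by omega))
  omega
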